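/- arXiv:1412.6265 — 9 statements merged into one kernel-verified Lean document; each statement's English description precedes it below -/
import Mathlib

section
/- Generalized Sauer–Shelah Lemma (first inequality): Let X and Y be finite sets, let H ⊆ Y^X be a set of functions from X to Y, and let k be an integer with 2 ≤ k ≤ |Y|. Then |H| ≤ Σ_{i=0}^{Dim_k(H)} C(|X|, i) · (k−1)^{|X|−i} · C(|Y|, k)^i, where C(a,b) denotes the binomial coefficient. -/
/-!
Pajor's form of the argument: with `c = C(|Y|, k)`, the family `H` has at most
`∑ (k - 1) ^ |X \ A| * c ^ |A|` members, the sum running over the sets `A` that `H` `k`-shatters.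
Grouping the `A` by cardinality gives the theorem.

To induct on the coordinates, overwrite the coordinate `a` of every member of `H` by a fixed value
and let `g` range over the resulting functions. If `s` values at `a` extend `g` to a member of `H`,
then `s ≤ (k - 1) + C(s, k)`, so `|H|` is at most `k - 1` times the number of functions `g` plus the
number of pairs `(g, Z)` with `Z` a `k`-set of values extending `g`. A set `A ∌ a` shattered by the
`g`'s is shattered by `H`; if those `g` that every value in a fixed `Z` extends already shatter `A`,
then `H` shatters `insert a A`.
-/

open Finset

/-- `A` is `k`-shattered by `H ⊆ Y^X`: for every `a ∈ A` there is a set `Ya a ⊆ Y` of size `k`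
such that every function on `A` taking values in the `Ya a`'s is a restriction of a member of `H`. -/
def kShatters {X Y : Type*} (H : Finset (X → Y)) (k : ℕ) (A : Finset X) : Prop :=
  ∃ Ya : X → Finset Y, (∀ a ∈ A, (Ya a).card = k) ∧
    ∀ f : X → Y, (∀ a ∈ A, f a ∈ Ya a) → ∃ h ∈ H, ∀ a ∈ A, h a = f a

/-- The `k`-dimension of `H`: the maximal cardinality of a `k`-shattered subset of `X`. -/
noncomputable def kDim {X Y : Type*} (H : Finset (X → Y)) (k : ℕ) : ℕ :=
  sSup {d : ℕ | ∃ A : Finset X, kShatters H k A ∧ A.card = d}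

open Function (update)

theorem sum_card_lt_eq_sum_range_choose_smul {X M : Type*} [Fintype X] [AddCommMonoid M] (m : ℕ)
    (w : ℕ → M) :
    ∑ A : Finset X with #A < m, w #A = ∑ i ∈ range m, (Fintype.card X).choose i • w i := by
  rw [← sum_fiberwise_of_maps_to (g := card) (t := range m) (by simp)]
  refine sum_congr rfl fun i hi ↦ ?_
  have hslice : {A ∈ ({A | #A < m} : Finset (Finset X)) | #A = i} = powersetCard i univ := by
    ext A
    simpa [mem_powersetCard] using fun hA : #A = i ↦ hA ▸ mem_range.1 hi
  rw [hslice, sum_powersetCard, card_univ]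

theorem le_add_choose_succ (k s : ℕ) : s ≤ k + s.choose (k + 1) := by
  induction s with
  | zero => exact Nat.zero_le _
  | succ s ih =>
    rcases lt_or_ge s k with hs | hs
    · omega
    · have hpos : 0 < s.choose k := Nat.choose_pos hs
      rw [Nat.choose_succ_succ']
      omega

theorem sum_powerset_insert_filter_mul_pow {X R : Type*} [DecidableEq X] [CommSemiring R]
    {a : X} {s : Finset X} (ha : a ∉ s) (p : Finset X → Prop) [DecidablePred p] (b c : R) :
    ∑ A ∈ (insert a s).powerset with p A, b ^ #(insert a s \ A) * c ^ #A =
      b * ∑ A ∈ s.powerset with p A, b ^ #(s \ A) * c ^ #A +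
        c * ∑ A ∈ s.powerset with p (insert a A), b ^ #(s \ A) * c ^ #A := by
  simp only [sum_filter]
  rw [sum_powerset_insert ha, mul_sum, mul_sum]
  congr 1 <;> refine sum_congr rfl fun A hA ↦ ?_ <;>
    have haA : a ∉ A := notMem_of_mem_powerset_of_notMem hA ha
  · rw [insert_sdiff_of_notMem _ haA, card_insert_of_notMem (by simp [ha]), mul_ite, mul_zero,
      pow_succ', mul_assoc]
  · rw [insert_sdiff_insert, sdiff_insert_of_notMem ha, card_insert_of_notMem haA, mul_ite,
      mul_zero, pow_succ', mul_left_comm]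

section Shattering

variable {X Y : Type*} {H : Finset (X → Y)} {k : ℕ} {A : Finset X}

theorem kShatters.card_le_kDim [Finite X] (hA : kShatters H k A) : #A ≤ kDim H k := by
  have := Fintype.ofFinite X
  exact le_csSup ⟨Fintype.card X, by rintro _ ⟨B, -, rfl⟩; exact B.card_le_univ⟩ ⟨A, hA, rfl⟩

theorem kShatters_empty (hH : H.Nonempty) : kShatters H k ∅ :=
  ⟨fun _ ↦ ∅, by simp, fun _ _ ↦ by simpa using hH.exists_mem⟩

variable [DecidableEq X] {a : X} {y : Y} {Z : Finset Y}

open scoped Classical in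
/-- The projection of `H` that forgets the coordinate `a`. Its members are kept as functions on
all of `X`, with the value `y` at `a`. -/
noncomputable def coordProj (H : Finset (X → Y)) (a : X) (y : Y) : Finset (X → Y) :=
  H.image (update · a y)

theorem mem_coordProj {g : X → Y} : g ∈ coordProj H a y ↔ ∃ h ∈ H, update h a y = g := by
  classical exact mem_image

theorem eq_of_mem_coordProj {f₀ g : X → Y} {s : Finset X} {x : X}
    (hH : ∀ h ∈ H, ∀ x ∉ insert a s, h x = f₀ x) (hg : g ∈ coordProj H a (f₀ a)) (hx : x ∉ s) :
    g x = f₀ x := by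
  obtain ⟨h, hh, rfl⟩ := mem_coordProj.1 hg
  rcases eq_or_ne x a with rfl | hxa
  · simp
  · simpa [hxa] using hH h hh x (by simp [hxa, hx])

open scoped Classical in
/-- The link of a set `Z` of values at `a`: the part of the projection of `H` all of whose
extensions by a value in `Z` lie in `H`. Like `coordProj H a y`, it consists of functions on all of
`X` with the value `y` at `a`. -/
noncomputable def coordLink (H : Finset (X → Y)) (a : X) (y : Y) (Z : Finset Y) :
    Finset (X → Y) :=
  {g ∈ coordProj H a y | ∀ z ∈ Z, update g a z ∈ H}

theorem mem_coordLink {g : X → Y} :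
    g ∈ coordLink H a y Z ↔ g ∈ coordProj H a y ∧ ∀ z ∈ Z, update g a z ∈ H := by
  classical exact mem_filter

theorem kShatters.of_coordProj (hA : kShatters (coordProj H a y) k A) (ha : a ∉ A) :
    kShatters H k A := by
  obtain ⟨Ya, hcard, hYa⟩ := hA
  refine ⟨Ya, hcard, fun f hf ↦ ?_⟩
  obtain ⟨g, hg, hgf⟩ := hYa f hf
  obtain ⟨h, hh, rfl⟩ := mem_coordProj.1 hg
  refine ⟨h, hh, fun x hx ↦ ?_⟩
  rw [← hgf x hx, Function.update_of_ne (ne_of_mem_of_not_mem hx ha)]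

theorem kShatters.insert_of_coordLink (hA : kShatters (coordLink H a y Z) k A) (hZ : #Z = k)
    (ha : a ∉ A) : kShatters H k (insert a A) := by
  have hne : ∀ x ∈ A, x ≠ a := fun x hx ↦ ne_of_mem_of_not_mem hx ha
  obtain ⟨Ya, hcard, hYa⟩ := hA
  refine ⟨update Ya a Z, ?_, fun f hf ↦ ?_⟩
  · simp +contextual [hZ, hcard, hne]
  · simp only [forall_mem_insert, Function.update_self] at hf ⊢
    obtain ⟨g, hg, hgf⟩ := hYa f fun x hx ↦ by simpa [hne x hx] using hf.2 x hx
    refine ⟨update g a (f a), (mem_coordLink.1 hg).2 _ hf.1, by simp, fun x hx ↦ ?_⟩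
    rw [Function.update_of_ne (hne x hx), hgf x hx]

variable [Fintype Y]

open scoped Classical in
/-- The fibre of `H` over `g` in the direction `a`: the values at `a` that turn `g` into a member
of `H`. -/
noncomputable def coordFiber (H : Finset (X → Y)) (a : X) (g : X → Y) : Finset Y :=
  {z | update g a z ∈ H}

theorem mem_coordFiber {g : X → Y} {z : Y} : z ∈ coordFiber H a g ↔ update g a z ∈ H := by
  simp [coordFiber]

theorem card_eq_sum_card_coordFiber (H : Finset (X → Y)) (a : X) (y : Y) :
    #H = ∑ g ∈ coordProj H a y, #(coordFiber H a g) := by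
  classical
  rw [card_eq_sum_card_fiberwise (f := (update · a y)) fun h hh ↦ mem_coordProj.2 ⟨h, hh, rfl⟩]
  refine sum_congr rfl fun g hg ↦ card_nbij' (fun h ↦ h a) (update g a) ?_ ?_ ?_ ?_
  · intro h hh
    obtain ⟨hhH, rfl⟩ := mem_filter.1 hh
    simpa [mem_coordFiber] using hhH
  · intro z hz
    obtain ⟨h, -, rfl⟩ := mem_coordProj.1 hg
    simpa [mem_coordFiber] using hz
  · intro h hh
    obtain ⟨-, rfl⟩ := mem_filter.1 hh
    simp
  · simp [Set.LeftInvOn]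

theorem sum_choose_card_coordFiber (H : Finset (X → Y)) (a : X) (y : Y) (k : ℕ) :
    ∑ g ∈ coordProj H a y, (#(coordFiber H a g)).choose k =
      ∑ Z ∈ powersetCard k univ, #(coordLink H a y Z) := by
  classical
  let r (g : X → Y) (Z : Finset Y) : Prop := ∀ z ∈ Z, update g a z ∈ H
  have habove (g : X → Y) :
      powersetCard k (coordFiber H a g) = bipartiteAbove r (powersetCard k univ) g := by
    ext Z
    simp [r, mem_powersetCard, subset_iff, mem_coordFiber, and_comm]
  have hbelow (Z : Finset Y) : bipartiteBelow r (coordProj H a y) Z = coordLink H a y Z := by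
    ext g
    rw [mem_bipartiteBelow, mem_coordLink]
  simp only [← card_powersetCard, habove, ← hbelow]
  exact sum_card_bipartiteAbove_eq_sum_card_bipartiteBelow r

theorem card_le_mul_card_coordProj_add_sum_card_coordLink (H : Finset (X → Y)) (a : X) (y : Y)
    (k : ℕ) :
    #H ≤ k * #(coordProj H a y) + ∑ Z ∈ powersetCard (k + 1) univ, #(coordLink H a y Z) :=
  calc #H = ∑ g ∈ coordProj H a y, #(coordFiber H a g) := card_eq_sum_card_coordFiber H a y
    _ ≤ ∑ g ∈ coordProj H a y, (k + (#(coordFiber H a g)).choose (k + 1)) :=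
      sum_le_sum fun g _ ↦ le_add_choose_succ k _
    _ = k * #(coordProj H a y) + ∑ Z ∈ powersetCard (k + 1) univ, #(coordLink H a y Z) := by
      rw [sum_add_distrib, sum_const, smul_eq_mul, mul_comm, sum_choose_card_coordFiber]

open scoped Classical in
/-- Fixing the values off `s` makes `H` a family of functions on `s` without changing the domain
`X` during the induction. -/
theorem card_le_sum_kShatters (k : ℕ) (f₀ : X → Y) (s : Finset X) (H : Finset (X → Y))
    (hH : ∀ h ∈ H, ∀ x ∉ s, h x = f₀ x) :
    #H ≤ ∑ A ∈ s.powerset with kShatters H (k + 1) A,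
      k ^ #(s \ A) * (Fintype.card Y).choose (k + 1) ^ #A := by
  induction s using Finset.induction_on generalizing H with
  | empty =>
    rcases H.eq_empty_or_nonempty with rfl | hne
    · simp
    · have hsub : H ⊆ {f₀} := fun h hh ↦ mem_singleton.2 (funext fun x ↦ hH h hh x (by simp))
      simpa [filter_singleton, kShatters_empty hne] using card_le_card hsub
  | insert a s ha ih =>
    set c := (Fintype.card Y).choose (k + 1)
    set P := coordProj H a (f₀ a)
    set L := coordLink H a (f₀ a)
    have hP : ∀ g ∈ P, ∀ x ∉ s, g x = f₀ x := fun g hg x ↦ eq_of_mem_coordProj hH hg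
    have hL (Z : Finset Y) : ∀ g ∈ L Z, ∀ x ∉ s, g x = f₀ x :=
      fun g hg ↦ hP g (mem_coordLink.1 hg).1
    have card_proj_le :
        #P ≤ ∑ A ∈ s.powerset with kShatters H (k + 1) A, k ^ #(s \ A) * c ^ #A :=
      (ih P hP).trans <| sum_le_sum_of_subset fun A hA ↦ by
        obtain ⟨hAs, hPA⟩ := mem_filter.1 hA
        exact mem_filter.2 ⟨hAs, hPA.of_coordProj (notMem_of_mem_powerset_of_notMem hAs ha)⟩
    have card_link_le : ∀ Z ∈ powersetCard (k + 1) univ, #(L Z) ≤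
        ∑ A ∈ s.powerset with kShatters H (k + 1) (insert a A), k ^ #(s \ A) * c ^ #A :=
      fun Z hZ ↦ (ih (L Z) (hL Z)).trans <| sum_le_sum_of_subset fun A hA ↦ by
        obtain ⟨hAs, hLA⟩ := mem_filter.1 hA
        have haA := notMem_of_mem_powerset_of_notMem hAs ha
        exact mem_filter.2 ⟨hAs, hLA.insert_of_coordLink (mem_powersetCard.1 hZ).2 haA⟩
    have sum_card_link_le : ∑ Z ∈ powersetCard (k + 1) univ, #(L Z) ≤
        c * ∑ A ∈ s.powerset with kShatters H (k + 1) (insert a A), k ^ #(s \ A) * c ^ #A := by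
      simpa only [card_powersetCard, card_univ, smul_eq_mul] using
        sum_le_card_nsmul _ _ _ card_link_le
    rw [sum_powerset_insert_filter_mul_pow ha]
    exact (card_le_mul_card_coordProj_add_sum_card_coordLink H a (f₀ a) k).trans <|
      add_le_add (Nat.mul_le_mul_left k card_proj_le) sum_card_link_le

end Shattering

/-- Generalized Sauer–Shelah Lemma, first inequality. -/
theorem generalized_sauer_shelah_first {X Y : Type*} [Fintype X] [Fintype Y]
    (H : Finset (X → Y)) (k : ℕ) (hk : 2 ≤ k) (hkY : k ≤ Fintype.card Y) :
    H.card ≤ ∑ i ∈ Finset.range (kDim H k + 1),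
      (Fintype.card X).choose i * (k - 1) ^ (Fintype.card X - i) *
        ((Fintype.card Y).choose k) ^ i := by
  classical
  obtain ⟨k, rfl⟩ : ∃ j, k = j + 1 := ⟨k - 1, by omega⟩
  rcases H.eq_empty_or_nonempty with rfl | ⟨f₀, -⟩
  · simp
  let w (i : ℕ) : ℕ := k ^ (Fintype.card X - i) * (Fintype.card Y).choose (k + 1) ^ i
  calc #H ≤ ∑ A ∈ univ.powerset with kShatters H (k + 1) A, w #A := by
        simpa only [w, ← compl_eq_univ_sdiff, card_compl] using
          card_le_sum_kShatters k f₀ univ H (by simp)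
    _ ≤ ∑ A : Finset X with #A < kDim H (k + 1) + 1, w #A :=
        sum_le_sum_of_subset fun A hA ↦ by
          simpa [Nat.lt_succ_iff] using (mem_filter.1 hA).2.card_le_kDim
    _ = ∑ i ∈ range (kDim H (k + 1) + 1), (Fintype.card X).choose i • w i :=
        sum_card_lt_eq_sum_range_choose_smul _ w
    _ = _ := by simp only [w, smul_eq_mul, Nat.add_sub_cancel, mul_assoc]
end

section
/- Recursive inequality for the maximal size of classes of bounded k-dimension: For all integers n ≥ k ≥ 2 and m > d > 0, M_{n,k}(d, m) ≤ (k−1) · M_{n,k}(d, m−1) + C(n, k) · M_{n,k}(d−1, m−1), where C(n,k) is the binomial coefficient. -/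
open Finset

/-- `M_{n,k}(d,m)`: the maximal cardinality of a class `H ⊆ [n]^{[m]}` with `k`-dimension at
most `d`. -/
noncomputable def Mnk (n k d m : ℕ) : ℕ :=
  sSup {c : ℕ | ∃ H : Finset (Fin m → Fin n), kDim H k ≤ d ∧ H.card = c}

/-! Delete one coordinate `x`. For each restriction `g` of a member of `H` to the other coordinates,
let `F g` be the set of values at `x` of the members of `H` extending `g`, so that `|H| = ∑ |F g|`.
Bound `|F g|` by `(k - 1) + C(|F g|, k)`, the binomial coefficient counting the `k`-subsets `S` of
`F g`. The class of all restrictions has dimension at most that of `H`, which gives the first term.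
Exchanging the order of summation, the second term is a sum over the `k`-sets `S` of the number of
`g` with `S ⊆ F g`; a set shattered by these `g` stays shattered by `H` after adding `x`, so their
dimension is smaller by one. -/

theorem kDim_le_iff {X Y : Type*} [Finite X] {H : Finset (X → Y)} {k d : ℕ} :
    kDim H k ≤ d ↔ ∀ A, kShatters H k A → #A ≤ d := by
  cases nonempty_fintype X
  have hbdd : BddAbove {c | ∃ A, kShatters H k A ∧ #A = c} := by
    refine ⟨Fintype.card X, ?_⟩
    rintro _ ⟨A, -, rfl⟩
    exact card_le_univ A
  rw [kDim, csSup_le_iff' hbdd]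
  exact ⟨fun h A hA ↦ h _ ⟨A, hA, rfl⟩, fun h _ ⟨A, hA, hc⟩ ↦ hc ▸ h A hA⟩

theorem Mnk_le_iff {n k d m c : ℕ} :
    Mnk n k d m ≤ c ↔ ∀ H : Finset (Fin m → Fin n), kDim H k ≤ d → #H ≤ c := by
  have hbdd : BddAbove {c | ∃ H : Finset (Fin m → Fin n), kDim H k ≤ d ∧ #H = c} := by
    refine ⟨Fintype.card (Fin m → Fin n), ?_⟩
    rintro _ ⟨H, -, rfl⟩
    exact card_le_univ H
  rw [Mnk, csSup_le_iff' hbdd]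
  exact ⟨fun h H hH ↦ h _ ⟨H, hH, rfl⟩, fun h _ ⟨H, hH, hc⟩ ↦ hc ▸ h H hH⟩

theorem card_le_Mnk {n k d m : ℕ} {H : Finset (Fin m → Fin n)} (hH : kDim H k ≤ d) :
    #H ≤ Mnk n k d m :=
  Mnk_le_iff.1 le_rfl H hH

section DoubleCounting

theorem le_add_choose_succ_s2 (a k : ℕ) : a ≤ k + a.choose (k + 1) := by
  induction a with
  | zero => exact Nat.zero_le _
  | succ a ih =>
    obtain hak | hka := Nat.lt_or_ge a k
    · exact hak.trans_le (Nat.le_add_right _ _)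
    · have hpos : 0 < a.choose k := Nat.choose_pos hka
      rw [Nat.choose_succ_succ']
      lia

variable {ι Y : Type*} [Fintype Y] [DecidableEq Y]

theorem sum_choose_card_eq_sum_card_filter_subset (P : Finset ι) (F : ι → Finset Y) (k : ℕ) :
    ∑ i ∈ P, (#(F i)).choose k = ∑ S ∈ powersetCard k univ, #{i ∈ P | S ⊆ F i} := by
  have choose_eq (i : ι) : (#(F i)).choose k = #{S ∈ powersetCard k univ | S ⊆ F i} := by
    rw [← card_powersetCard]
    congr 1
    ext S
    simp only [mem_powersetCard, mem_filter, subset_univ, true_and, and_comm]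
  simp only [choose_eq]
  exact sum_card_bipartiteAbove_eq_sum_card_bipartiteBelow fun i S ↦ S ⊆ F i

theorem sum_card_le_mul_card_add_sum_card_filter_subset
    (P : Finset ι) (F : ι → Finset Y) (k : ℕ) :
    ∑ i ∈ P, #(F i) ≤ k * #P + ∑ S ∈ powersetCard (k + 1) univ, #{i ∈ P | S ⊆ F i} :=
  calc ∑ i ∈ P, #(F i) ≤ ∑ i ∈ P, (k + (#(F i)).choose (k + 1)) :=
        sum_le_sum fun i _ ↦ le_add_choose_succ_s2 _ k
    _ = k * #P + ∑ S ∈ powersetCard (k + 1) univ, #{i ∈ P | S ⊆ F i} := by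
        rw [sum_add_distrib, sum_const, smul_eq_mul, mul_comm,
          sum_choose_card_eq_sum_card_filter_subset]

end DoubleCounting

section Coordinates

variable {W X Y : Type*} [DecidableEq (W → Y)]

/-- The restriction of the class `H ⊆ Y^X` to `Y^W`, where `W` is regarded as a subset of `X`
through the embedding `e`. -/
def restrictClass (H : Finset (X → Y)) (e : W ↪ X) : Finset (W → Y) :=
  H.image (· ∘ e)

/-- The values at `x` of the members of `H` that extend `g`. -/
def extensionValues [DecidableEq Y] (H : Finset (X → Y)) (e : W ↪ X) (x : X) (g : W → Y) :
    Finset Y :=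
  {h ∈ H | h ∘ e = g}.image (· x)

/-- The restrictions of members of `H` to `W` that extend to members of `H` with every value
`y ∈ S` at `x`, in analogy with the link of a vertex in a simplicial complex. -/
def linkClass [DecidableEq Y] (H : Finset (X → Y)) (e : W ↪ X) (x : X) (S : Finset Y) :
    Finset (W → Y) :=
  {g ∈ restrictClass H e | S ⊆ extensionValues H e x g}

variable {H : Finset (X → Y)} {e : W ↪ X} {x : X} {k : ℕ}

theorem kShatters.of_restrictClass {A : Finset W} (hA : kShatters (restrictClass H e) k A) :
    kShatters H k (A.map e) := by
  obtain ⟨Ya, hcard, hext⟩ := hA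
  refine ⟨Function.extend e Ya fun _ ↦ ∅, ?_, fun f hf ↦ ?_⟩
  · simpa only [forall_mem_map, e.injective.extend_apply] using hcard
  · simp only [forall_mem_map, e.injective.extend_apply] at hf ⊢
    obtain ⟨g, hg, hgf⟩ := hext (f ∘ e) hf
    obtain ⟨h, hh, rfl⟩ := mem_image.1 hg
    exact ⟨h, hh, hgf⟩

theorem kDim_restrictClass_le [Finite X] : kDim (restrictClass H e) k ≤ kDim H k := by
  have : Finite W := Finite.of_injective e e.injective
  refine kDim_le_iff.2 fun A hA ↦ ?_
  rw [← card_map e]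
  exact kDim_le_iff.1 le_rfl _ hA.of_restrictClass

variable [DecidableEq Y]

theorem exists_extension_of_mem_linkClass {S : Finset Y} {g : W → Y} {y : Y}
    (hg : g ∈ linkClass H e x S) (hy : y ∈ S) : ∃ h ∈ H, h ∘ e = g ∧ h x = y := by
  obtain ⟨h, hh, hxy⟩ := mem_image.1 ((mem_filter.1 hg).2 hy)
  obtain ⟨hH, hhg⟩ := mem_filter.1 hh
  exact ⟨h, hH, hhg, hxy⟩

theorem kShatters.insert_of_linkClass [DecidableEq X] {S : Finset Y} {A : Finset W}
    (hx : x ∉ Set.range e) (hS : #S = k) (hA : kShatters (linkClass H e x S) k A) :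
    kShatters H k (insert x (A.map e)) := by
  obtain ⟨Ya, hcard, hext⟩ := hA
  let Yb : X → Finset Y := Function.update (Function.extend e Ya fun _ ↦ ∅) x S
  have Yb_self : Yb x = S := Function.update_self ..
  have Yb_apply (w : W) : Yb (e w) = Ya w :=
    (Function.update_of_ne (fun hw ↦ hx ⟨w, hw⟩) _ _).trans (e.injective.extend_apply ..)
  refine ⟨Yb, ?_, fun f hf ↦ ?_⟩
  · simpa only [forall_mem_insert, forall_mem_map, Yb_self, Yb_apply] using ⟨hS, hcard⟩
  · simp only [forall_mem_insert, forall_mem_map, Yb_self, Yb_apply] at hf ⊢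
    obtain ⟨g, hg, hgf⟩ := hext (f ∘ e) hf.2
    obtain ⟨h, hh, rfl, hhx⟩ := exists_extension_of_mem_linkClass hg hf.1
    exact ⟨h, hh, hhx, hgf⟩

theorem kDim_linkClass_le [Finite X] {S : Finset Y} {d : ℕ} (hx : x ∉ Set.range e)
    (hS : #S = k) (hH : kDim H k ≤ d + 1) : kDim (linkClass H e x S) k ≤ d := by
  classical
  have : Finite W := Finite.of_injective e e.injective
  refine kDim_le_iff.2 fun A hA ↦ ?_
  have hcard : #(insert x (A.map e)) ≤ d + 1 :=
    kDim_le_iff.1 hH _ (hA.insert_of_linkClass hx hS)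
  have hxA : x ∉ A.map e := fun hmem ↦ hx (coe_map_subset_range e A hmem)
  rw [card_insert_of_notMem hxA, card_map] at hcard
  exact Nat.le_of_succ_le_succ hcard

theorem card_eq_sum_card_extensionValues (hx : ∀ z ≠ x, z ∈ Set.range e) :
    #H = ∑ g ∈ restrictClass H e, #(extensionValues H e x g) := by
  rw [card_eq_sum_card_image (· ∘ e) H]
  refine sum_congr rfl fun g _ ↦ (card_image_of_injOn ?_).symm
  intro h₁ hh₁ h₂ hh₂ hxeq
  have hcomp : h₁ ∘ e = h₂ ∘ e := (mem_filter.1 hh₁).2.trans (mem_filter.1 hh₂).2.symm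
  ext z
  obtain rfl | hz := eq_or_ne z x
  · exact hxeq
  · obtain ⟨w, rfl⟩ := hx z hz
    exact congrFun hcomp w

theorem card_le_mul_card_restrictClass_add_sum_card_linkClass [Fintype Y]
    (hx : ∀ z ≠ x, z ∈ Set.range e) :
    #H ≤ k * #(restrictClass H e) + ∑ S ∈ powersetCard (k + 1) univ, #(linkClass H e x S) :=
  (card_eq_sum_card_extensionValues hx).trans_le
    (sum_card_le_mul_card_add_sum_card_filter_subset _ _ k)

end Coordinates

theorem Mnk_recursive_general (n k d m : ℕ) :
    Mnk n (k + 1) (d + 1) (m + 1) ≤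
      k * Mnk n (k + 1) (d + 1) m + n.choose (k + 1) * Mnk n (k + 1) d m := by
  refine Mnk_le_iff.2 fun H hH ↦ ?_
  let e : Fin m ↪ Fin (m + 1) := Fin.succEmb m
  have zero_notMem : 0 ∉ Set.range e := fun ⟨i, hi⟩ ↦ Fin.succ_ne_zero i hi
  have mem_range (i) (hi : i ≠ 0) : i ∈ Set.range e := Fin.exists_succ_eq.2 hi
  have hrestrict : #(restrictClass H e) ≤ Mnk n (k + 1) (d + 1) m :=
    card_le_Mnk (kDim_restrictClass_le.trans hH)
  have hlink : ∀ S ∈ powersetCard (k + 1) univ, #(linkClass H e 0 S) ≤ Mnk n (k + 1) d m :=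
    fun S hS ↦ card_le_Mnk (kDim_linkClass_le zero_notMem (mem_powersetCard.1 hS).2 hH)
  calc #H ≤ k * #(restrictClass H e) + ∑ S ∈ powersetCard (k + 1) univ, #(linkClass H e 0 S) :=
        card_le_mul_card_restrictClass_add_sum_card_linkClass mem_range
    _ ≤ k * Mnk n (k + 1) (d + 1) m + n.choose (k + 1) * Mnk n (k + 1) d m := by
        gcongr
        simpa only [card_powersetCard, card_univ, Fintype.card_fin, smul_eq_mul]
          using sum_le_card_nsmul _ _ _ hlink

/-- Recursive inequality for `M_{n,k}(d,m)`. -/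
theorem Mnk_recursive (n k d m : ℕ) (hk : 2 ≤ k) (hkn : k ≤ n) (hd : 0 < d) (hdm : d < m) :
    Mnk n k d m ≤ (k - 1) * Mnk n k d (m - 1) + n.choose k * Mnk n k (d - 1) (m - 1) := by
  obtain ⟨k, rfl⟩ := Nat.exists_eq_add_of_le' (one_le_two.trans hk)
  obtain ⟨d, rfl⟩ := Nat.exists_eq_add_of_le' hd
  obtain ⟨m, rfl⟩ := Nat.exists_eq_add_of_le' (Nat.zero_lt_of_lt hdm)
  exact Mnk_recursive_general n k d m
end

section
/- Closed-form bound for the Sauer–Shelah recursion: Let n ≥ k ≥ 2 be integers and define numbers N_{n,k}(d, m) for m ≥ d ≥ 0 by the initial conditions N_{n,k}(m, m) = n^m and N_{n,k}(0, m) = (k−1)^m, and the recursion N_{n,k}(d, m) = (k−1)·N_{n,k}(d, m−1) + C(n,k)·N_{n,k}(d−1, m−1) for m > d > 0. Then for every m ≥ d ≥ 1, N_{n,k}(d, m) ≤ Σ_{i=0}^{d} C(m, i) · (k−1)^{m−i} · C(n, k)^i. -/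
open Finset

/-!
The truncated binomial sum `∑_{i ≤ d} C(m,i) a^(m-i) c^i` satisfies the recursion with coefficients
`a` and `c` exactly, by Pascal's rule, and its values on the boundary are `a ^ m` at `d = 0` and
`(a + c) ^ m` at `d = m`. It therefore dominates any solution whose boundary values are no larger.
For `a = k - 1` and `c = C(n,k)` this leaves only `n ≤ (k - 1) + C(n,k)`.
-/

section TruncatedAddPow

variable {R : Type*} [CommSemiring R]

/-- The binomial expansion of `(a + c) ^ m` truncated after the term of degree `d` in `c`: the
closed form that majorizes the solutions of the Sauer–Shelah recursion. Terms with `i > m` vanish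
through `m.choose i`, so the truncated exponent `m - i` is harmless and `d` may exceed `m`. -/
def truncatedAddPow (a c : R) (d m : ℕ) : R :=
  ∑ i ∈ range (d + 1), m.choose i * a ^ (m - i) * c ^ i

theorem truncatedAddPow_zero (a c : R) (m : ℕ) : truncatedAddPow a c 0 m = a ^ m := by
  simp [truncatedAddPow]

theorem truncatedAddPow_self (a c : R) (m : ℕ) : truncatedAddPow a c m m = (a + c) ^ m := by
  rw [truncatedAddPow, add_comm a c, add_pow]
  exact sum_congr rfl fun i _ => by ring

theorem choose_succ_succ_mul_pow_sub (a : R) (m i : ℕ) :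
    ((m + 1).choose (i + 1) : R) * a ^ (m - i) =
      a * (m.choose (i + 1) * a ^ (m - (i + 1))) + m.choose i * a ^ (m - i) := by
  rcases lt_or_ge i m with him | hmi
  · obtain ⟨r, rfl⟩ := Nat.exists_eq_add_of_lt him
    rw [Nat.choose_succ_succ, show i + r + 1 - i = r + 1 by omega,
      show i + r + 1 - (i + 1) = r by omega]
    push_cast
    ring
  · simp [Nat.choose_succ_succ, Nat.choose_eq_zero_of_lt (Nat.lt_succ_of_le hmi)]

theorem truncatedAddPow_succ_succ (a c : R) (d m : ℕ) :
    truncatedAddPow a c (d + 1) (m + 1) =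
      a * truncatedAddPow a c (d + 1) m + c * truncatedAddPow a c d m := by
  have pascal (i : ℕ) :
      ((m + 1).choose (i + 1) : R) * a ^ (m + 1 - (i + 1)) * c ^ (i + 1) =
        a * (m.choose (i + 1) * a ^ (m - (i + 1)) * c ^ (i + 1)) +
          c * (m.choose i * a ^ (m - i) * c ^ i) := by
    rw [Nat.add_sub_add_right, choose_succ_succ_mul_pow_sub]
    ring
  simp only [truncatedAddPow]
  rw [sum_range_succ', sum_range_succ' _ (d + 1), sum_congr rfl fun i _ => pascal i,
    sum_add_distrib, ← mul_sum, ← mul_sum]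
  simp only [Nat.choose_zero_right, Nat.cast_one, Nat.sub_zero, pow_zero]
  ring

variable [PartialOrder R] [IsOrderedRing R]

theorem sauer_recursion_closed_form_general {a c : R} (ha : 0 ≤ a) (hc : 0 ≤ c) {N : ℕ → ℕ → R}
    (hdiag : ∀ m, N m m ≤ (a + c) ^ m) (hzero : ∀ m, N 0 m ≤ a ^ m)
    (hrec : ∀ d m, d < m → N (d + 1) (m + 1) ≤ a * N (d + 1) m + c * N d m)
    {d m : ℕ} (hdm : d ≤ m) : N d m ≤ truncatedAddPow a c d m := by
  induction m generalizing d with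
  | zero =>
    obtain rfl := Nat.le_zero.mp hdm
    exact (hdiag 0).trans_eq (truncatedAddPow_self a c 0).symm
  | succ m ih =>
    rcases hdm.eq_or_lt with rfl | hlt
    · exact (hdiag _).trans_eq (truncatedAddPow_self a c _).symm
    cases d with
    | zero => exact (hzero _).trans_eq (truncatedAddPow_zero a c _).symm
    | succ d =>
      have hd : d < m := Nat.lt_of_succ_lt_succ hlt
      calc N (d + 1) (m + 1)
          ≤ a * N (d + 1) m + c * N d m := hrec d m hd
        _ ≤ a * truncatedAddPow a c (d + 1) m + c * truncatedAddPow a c d m := by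
          gcongr
          · exact ih hd
          · exact ih hd.le
        _ = truncatedAddPow a c (d + 1) (m + 1) := (truncatedAddPow_succ_succ a c d m).symm

end TruncatedAddPow

theorem sub_add_one_le_choose {n k : ℕ} (hk : 0 < k) (hkn : k ≤ n) : n - k + 1 ≤ n.choose k :=
  calc n - k + 1
      = (n - k + 1).choose (n - k) := (Nat.choose_succ_self_right _).symm
    _ ≤ n.choose (n - k) := Nat.choose_le_choose _ (by omega)
    _ = n.choose k := Nat.choose_symm hkn

/-- Closed-form bound for the Sauer–Shelah recursion: any family of numbers `N d m`
satisfying the initial conditions `N m m = n ^ m`, `N 0 m = (k-1) ^ m` and the recursion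
`N d m = (k-1) * N d (m-1) + C(n,k) * N (d-1) (m-1)` for `m > d > 0` satisfies
`N d m ≤ ∑_{i=0}^{d} C(m,i) * (k-1)^(m-i) * C(n,k)^i` for all `m ≥ d ≥ 1`. -/
theorem sauer_recursion_closed_form (n k : ℕ) (hk : 2 ≤ k) (hkn : k ≤ n)
    (N : ℕ → ℕ → ℕ)
    (hdiag : ∀ m : ℕ, N m m = n ^ m)
    (hzero : ∀ m : ℕ, N 0 m = (k - 1) ^ m)
    (hrec : ∀ d m : ℕ, 0 < d → d < m →
      N d m = (k - 1) * N d (m - 1) + n.choose k * N (d - 1) (m - 1)) :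
    ∀ d m : ℕ, 1 ≤ d → d ≤ m →
      N d m ≤ ∑ i ∈ Finset.range (d + 1), m.choose i * (k - 1) ^ (m - i) * (n.choose k) ^ i := by
  have hn : n ≤ (k - 1) + n.choose k := by
    have := sub_add_one_le_choose (by omega) hkn
    omega
  intro d m _ hdm
  exact sauer_recursion_closed_form_general (Nat.zero_le _) (Nat.zero_le _)
    (fun m => (hdiag m).trans_le (Nat.pow_le_pow_left hn m)) (fun m => (hzero m).le)
    (fun d m hd => (hrec (d + 1) (m + 1) d.succ_pos (Nat.succ_lt_succ hd)).le) hdm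
end

section
/- From a k-shattered set to a fully shattered pair via pigeonhole: Let X and Y be finite sets with |Y| = n, let H ⊆ Y^X, let k be an integer with 2 ≤ k ≤ n, and suppose T ⊆ X is k-shattered by H. Then there exist a subset S ⊆ T with |S| ≥ |T|/C(n, k) and a subset A ⊆ Y with |A| = k such that every function g : S → A is the restriction to S of some function in H. -/
open Finset

/-!
Sort the points `a ∈ T` by their set `F a` of `k` admissible values. There are at most
`(Fintype.card Y).choose k` classes, so some class `S = {a ∈ T | F a = A}` holds the average share
of `T`. A function sending `S` into `A` extends to a choice from `F` on all of `T`, since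
the sets `F a` outside the class are nonempty, and the extension agrees on `T` with some
member of `H`.
-/

section Pigeonhole

variable {α β 𝕜 : Type*} [DecidableEq β] [Field 𝕜] [LinearOrder 𝕜] [IsStrictOrderedRing 𝕜]

theorem exists_card_div_card_le_card_fiber {s : Finset α} {t : Finset β} {f : α → β}
    (hf : ∀ a ∈ s, f a ∈ t) (ht : t.Nonempty) :
    ∃ b ∈ t, (#s : 𝕜) / #t ≤ #{a ∈ s | f a = b} := by
  have ht' : (#t : 𝕜) ≠ 0 := Nat.cast_ne_zero.2 ht.card_ne_zero
  refine exists_le_card_fiber_of_nsmul_le_card_of_maps_to hf ht ?_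
  rw [nsmul_eq_mul, mul_div_cancel₀ _ ht']

end Pigeonhole

section Shattering

variable {X Y : Type*}

/-- `H` shatters `T` with the witness sets `F`: on `T`, every choice of values `f a ∈ F a` is
realized by a member of `H`. This is the condition on `(Y_a)` in `k`-shattering, without the
requirement that the sets have `k` elements. -/
def ShattersWith (H : Set (X → Y)) (T : Set X) (F : X → Set Y) : Prop :=
  ∀ f ∈ T.pi F, ∃ h ∈ H, T.EqOn h f

namespace ShattersWith

variable {H : Set (X → Y)} {S T : Set X} {F G : X → Set Y}

theorem mono (h : ShattersWith H T F) (hST : S ⊆ T) (hF : ∀ a ∈ T \ S, (F a).Nonempty) :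
    ShattersWith H S F := by
  classical
  intro f hf
  obtain ⟨e, he⟩ : ((T \ S).pi F).Nonempty := Set.pi_nonempty_iff.2 fun a => by
    by_cases ha : a ∈ T \ S
    · exact (hF a ha).imp fun _ hy _ => hy
    · exact ⟨f a, fun ha' => absurd ha' ha⟩
  have hg : S.piecewise f e ∈ T.pi F := fun a ha => by
    by_cases haS : a ∈ S
    · simpa [haS] using hf a haS
    · simpa [haS] using he a ⟨ha, haS⟩
  obtain ⟨g, hgH, hgT⟩ := h _ hg
  exact ⟨g, hgH, (hgT.mono hST).trans (S.piecewise_eqOn f e)⟩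

theorem congr (h : ShattersWith H T F) (hFG : T.EqOn F G) : ShattersWith H T G := by
  intro f hf
  exact h f (Set.pi_congr rfl hFG ▸ hf)

theorem fiber (h : ShattersWith H T F) {A : Set Y}
    (hF : ∀ a ∈ T, F a ≠ A → (F a).Nonempty) :
    ShattersWith H {a ∈ T | F a = A} fun _ => A :=
  (h.mono (Set.sep_subset _ _) fun a ha => hF a ha.1 fun hA => ha.2 ⟨ha.1, hA⟩).congr
    fun _ ha => ha.2

end ShattersWith

theorem kShatters_iff_exists_shattersWith {H : Finset (X → Y)} {k : ℕ} {T : Finset X} :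
    kShatters H k T ↔
      ∃ F : X → Finset Y, (∀ a ∈ T, #(F a) = k) ∧ ShattersWith (H : Set (X → Y)) T fun a => F a :=
  Iff.rfl

theorem shattered_pair_of_kShattered_general [Fintype Y] {H : Set (X → Y)} {k : ℕ}
    (hk : k ≤ Fintype.card Y) {T : Finset X} {F : X → Finset Y} (hF : ∀ a ∈ T, #(F a) = k)
    (hT : ShattersWith H T fun a => F a) :
    ∃ (S : Finset X) (A : Finset Y), S ⊆ T ∧ #A = k ∧
      (#T : ℝ) / ((Fintype.card Y).choose k : ℝ) ≤ #S ∧ ShattersWith H S fun _ => A := by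
  classical
  have hF_mem : ∀ a ∈ T, F a ∈ powersetCard k univ := fun a ha =>
    mem_powersetCard_univ.2 (hF a ha)
  obtain ⟨A, hA, hle⟩ := exists_card_div_card_le_card_fiber (𝕜 := ℝ) hF_mem
    (powersetCard_nonempty.2 hk)
  rw [card_powersetCard, card_univ] at hle
  have hAk : #A = k := mem_powersetCard_univ.1 hA
  refine ⟨{a ∈ T | F a = A}, A, filter_subset _ _, hAk, hle, ?_⟩
  have hF_ne : ∀ a ∈ T, F a ≠ A → (F a).Nonempty := fun a ha hne =>
    nonempty_iff_ne_empty.2 fun h0 =>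
      hne (eq_of_subset_of_card_le (h0 ▸ empty_subset A) (by rw [hF a ha, hAk]))
  simpa using hT.fiber (A := A) (by simpa using hF_ne)

end Shattering

/-- From a `k`-shattered set to a fully shattered pair via pigeonhole. -/
theorem shattered_pair_of_kShattered {X Y : Type*} [Fintype X] [Fintype Y]
    (H : Finset (X → Y)) (k : ℕ) (hk : 2 ≤ k) (hkn : k ≤ Fintype.card Y)
    (T : Finset X) (hT : kShatters H k T) :
    ∃ (S : Finset X) (A : Finset Y), S ⊆ T ∧ A.card = k ∧
      (T.card : ℝ) / ((Fintype.card Y).choose k : ℝ) ≤ (S.card : ℝ) ∧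
      ∀ g : X → Y, (∀ x ∈ S, g x ∈ A) → ∃ h ∈ H, ∀ x ∈ S, h x = g x := by
  obtain ⟨F, hF, hFT⟩ := kShatters_iff_exists_shattersWith.1 hT
  exact shattered_pair_of_kShattered_general hkn hF hFT
end

section
/- Large restriction from approximate intersection: Let X be a set of m items and Y a set of n indices, let k ≥ 1 be an integer, and assume H ⊆ P(X, Y) has the (n/(1+2k))-intersection property. Then there exists a set S ⊆ X of size |S| ≥ m/n such that |H|_{S,Y}| ≥ (1+k)^{m/n}. -/
open Finset

/-- `S` is a `d`-duplicate allocation of the items `X` to the indices `Y`. -/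
def IsDupAlloc {X Y : Type*} [DecidableEq X] [Fintype Y] (d : ℕ) (S : Y → Finset X) : Prop :=
  ∀ x : X, (Finset.univ.filter (fun y => x ∈ S y)).card ≤ d

/-- `H` has the `α`-intersection property. -/
def HasIntersection {X Y : Type*} [DecidableEq X] [Fintype Y] (H : Set (Y → Finset X))
    (α : ℝ) : Prop :=
  ∀ T : Y → Finset X, IsDupAlloc 1 T →
    ∃ S ∈ H, (1 / α) * ((∑ y : Y, (T y).card : ℕ) : ℝ) ≤
      ((∑ y : Y, ((T y) ∩ (S y)).card : ℕ) : ℝ)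

/-- `H|_{S,Y}`: the functions from `S` to `Y` induced on `S` by the allocations of `H`. -/
def RestrictAll {X Y : Type*} (H : Set (Y → Finset X)) (S : Finset X) : Set (↥S → Y) :=
  {f | ∃ T ∈ H, ∀ (y : Y) (x : ↥S), (f x = y ↔ (x : X) ∈ T y)}

/-!
Write `m = |X|`, `n = |Y|` and let `H` have the `n / (1 + b)`-intersection property. Applied to the
fibres of a function `f : X → Y`, that property yields a member of `H` agreeing with `f` on a set of
at least `(1 + b) m / n` items. A proportion of at least `(b / n) ^ t` of the `t`-element sets of
items lies inside this set when `t = ⌈m / n⌉`, because the items already drawn number less than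
`m / n`, so that at least `b m / n` agreeing items remain for each draw. Averaging over `f` gives a
`t`-element set `A` to which at least `(b / n) ^ t * n ^ m` functions restrict as members of
`H|_{A,Y}`. Each function `A → Y` extends to `n ^ (m - t)` functions `X → Y`, so
`b ^ t ≤ |H|_{A,Y}|`. For `b = 2 k` this is more than required, as `1 + k ≤ 2 k`.
-/

section Counting

theorem pow_mul_choose_le_choose {R : Type*} [CommSemiring R] [LinearOrder R]
    [IsStrictOrderedRing R] {c : R} (hc : 0 ≤ c) {m s t : ℕ}
    (h : ∀ i < t, c * (m - i : ℕ) ≤ (s - i : ℕ)) :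
    c ^ t * m.choose t ≤ s.choose t := by
  have descFactorial_le : c ^ t * m.descFactorial t ≤ s.descFactorial t := by
    have hprod := prod_le_prod (s := range t) (fun i _ ↦ mul_nonneg hc (Nat.cast_nonneg (m - i)))
      (fun i hi ↦ h i (mem_range.mp hi))
    simpa [Nat.descFactorial_eq_prod_range, prod_mul_distrib] using hprod
  have factorial_pos : (0 : R) < t.factorial := mod_cast t.factorial_pos
  refine le_of_mul_le_mul_left ?_ factorial_pos
  simpa [Nat.descFactorial_eq_factorial_mul_choose, mul_left_comm] using descFactorial_le

theorem exists_mul_card_le_card_bipartiteBelow {α β R : Type*} [CommSemiring R] [LinearOrder R]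
    [IsStrictOrderedRing R] (r : α → β → Prop) [∀ a b, Decidable (r a b)] {s : Finset α}
    {t : Finset β} (ht : t.Nonempty) {p : R} (h : ∀ a ∈ s, p * #t ≤ #(t.bipartiteAbove r a)) :
    ∃ b ∈ t, p * #s ≤ #(s.bipartiteBelow r b) := by
  refine exists_le_of_sum_le ht ?_
  calc ∑ _b ∈ t, p * #s = ∑ _a ∈ s, p * #t := by
        simp only [sum_const, nsmul_eq_mul]
        ring
    _ ≤ ∑ a ∈ s, (#(t.bipartiteAbove r a) : R) := sum_le_sum h
    _ = ∑ b ∈ t, (#(s.bipartiteBelow r b) : R) := mod_cast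
      sum_card_bipartiteAbove_eq_sum_card_bipartiteBelow r

theorem pow_card_mul_ncard_setOf_restrict_mem {X Y : Type*} [Fintype X] [Fintype Y]
    (A : Finset X) (R : Set (A → Y)) :
    Fintype.card Y ^ #A * {f : X → Y | A.restrict f ∈ R}.ncard =
      Fintype.card Y ^ Fintype.card X * R.ncard := by
  classical
  let e := Equiv.piEquivPiSubtypeProd (· ∈ A) (fun _ ↦ Y)
  have preimage_eq : {f : X → Y | A.restrict f ∈ R} = e ⁻¹' (R ×ˢ Set.univ) := by
    ext f
    simp [e, Finset.restrict_def]
  have card_extensions : (Set.univ : Set ({x // x ∉ A} → Y)).ncard =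
      Fintype.card Y ^ (Fintype.card X - #A) := by
    simp [Set.ncard_univ, Fintype.card_subtype_compl]
  rw [preimage_eq, Set.ncard_preimage_of_injective_subset_range e.injective (by simp),
    Set.ncard_prod, card_extensions, mul_left_comm, ← pow_add,
    Nat.add_sub_cancel' A.card_le_univ, mul_comm]

end Counting

section Allocations

variable {X Y : Type*}

theorem restrictAll_empty_nonempty {H : Set (Y → Finset X)} (hH : H.Nonempty) :
    (RestrictAll H ∅).Nonempty := by
  obtain ⟨S, hS⟩ := hH
  exact ⟨fun x ↦ absurd x.2 (notMem_empty _), S, hS, fun _ x ↦ absurd x.2 (notMem_empty _)⟩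

variable [DecidableEq X]

theorem isDupAlloc_one_iff [Fintype Y] {S : Y → Finset X} :
    IsDupAlloc 1 S ↔ ∀ x y z, x ∈ S y → x ∈ S z → y = z := by
  simp only [IsDupAlloc, card_le_one, mem_filter_univ]
  grind

theorem HasIntersection.nonempty [Fintype Y] {H : Set (Y → Finset X)} {α : ℝ}
    (hInt : HasIntersection H α) : H.Nonempty := by
  obtain ⟨S, hS, -⟩ := hInt (fun _ ↦ ∅) (by simp [IsDupAlloc])
  exact ⟨S, hS⟩

variable [Fintype X]

/-- The set of items on which the family `S` agrees with `f`, that is, which `S` allocates to the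
index prescribed by `f`. When `S` is the allocation by the fibres of some `g : X → Y`, this is the
set on which `f` and `g` coincide. -/
def agreementSet (S : Y → Finset X) (f : X → Y) : Finset X :=
  {x | x ∈ S (f x)}

theorem mem_agreementSet {S : Y → Finset X} {f : X → Y} {x : X} :
    x ∈ agreementSet S f ↔ x ∈ S (f x) :=
  mem_filter_univ x

theorem restrict_mem_restrictAll [Fintype Y] {H : Set (Y → Finset X)} {S : Y → Finset X}
    (hS : S ∈ H) (hAlloc : IsDupAlloc 1 S) {f : X → Y} {A : Finset X}
    (hA : A ⊆ agreementSet S f) : A.restrict f ∈ RestrictAll H A := by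
  refine ⟨S, hS, fun y x ↦ ?_⟩
  have hx : (x : X) ∈ S (f x) := mem_agreementSet.mp (hA x.2)
  exact ⟨fun hy ↦ hy ▸ hx, isDupAlloc_one_iff.mp hAlloc x (f x) y hx⟩

theorem sum_card_fiber_inter [Fintype Y] [DecidableEq Y] (S : Y → Finset X) (f : X → Y) :
    ∑ y, #(({x | f x = y} : Finset X) ∩ S y) = #(agreementSet S f) := by
  rw [card_eq_sum_card_fiberwise (f := f) (t := univ) (by simp)]
  refine sum_congr rfl fun y _ ↦ congrArg card ?_
  ext x
  simp only [mem_inter, mem_filter, mem_univ, true_and, mem_agreementSet]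
  grind

theorem HasIntersection.exists_le_card_agreementSet [Fintype Y] {H : Set (Y → Finset X)} {α : ℝ}
    (hInt : HasIntersection H α) (f : X → Y) :
    ∃ S ∈ H, 1 / α * Fintype.card X ≤ #(agreementSet S f) := by
  let _ : DecidableEq Y := Classical.decEq Y
  have fiber_isDupAlloc : IsDupAlloc 1 fun y ↦ ({x | f x = y} : Finset X) := by
    simp +contextual [isDupAlloc_one_iff]
  obtain ⟨S, hS, hle⟩ := hInt _ fiber_isDupAlloc
  rw [sum_card_fiber_inter,
    ← card_eq_sum_card_fiberwise (s := univ) (t := univ) (by simp)] at hle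
  exact ⟨S, hS, hle⟩

theorem HasIntersection.exists_pow_mul_choose_le_choose [Fintype Y] [Nonempty Y]
    {H : Set (Y → Finset X)} {b : ℝ} (hb : 0 ≤ b)
    (hInt : HasIntersection H (Fintype.card Y / (1 + b))) {t : ℕ}
    (ht : ∀ i < t, Fintype.card Y * i < Fintype.card X) (f : X → Y) :
    ∃ S ∈ H, (b / Fintype.card Y) ^ t * (Fintype.card X).choose t ≤
      (#(agreementSet S f)).choose t := by
  obtain ⟨S, hS, hle⟩ := hInt.exists_le_card_agreementSet f
  refine ⟨S, hS, pow_mul_choose_le_choose (by positivity) fun i hi ↦ ?_⟩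
  have card_pos : (0 : ℝ) < Fintype.card Y := mod_cast Fintype.card_pos
  have drawn_le : (i : ℝ) ≤ Fintype.card X / Fintype.card Y :=
    (le_div_iff₀' card_pos).mpr (mod_cast (ht i hi).le)
  calc b / Fintype.card Y * (Fintype.card X - i : ℕ)
      ≤ b / Fintype.card Y * Fintype.card X := by gcongr; exact Nat.sub_le _ _
    _ = 1 / (Fintype.card Y / (1 + b)) * Fintype.card X - Fintype.card X / Fintype.card Y := by
      field
    _ ≤ #(agreementSet S f) - i := sub_le_sub hle drawn_le
    _ ≤ (#(agreementSet S f) - i : ℕ) := by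
      rw [sub_le_iff_le_add]
      exact mod_cast Nat.sub_le_iff_le_add.mp le_rfl

theorem HasIntersection.exists_pow_mul_card_le_ncard_setOf_restrict_mem [Fintype Y] [Nonempty Y]
    {H : Set (Y → Finset X)} (hAlloc : ∀ S ∈ H, IsDupAlloc 1 S) {b : ℝ} (hb : 0 ≤ b)
    (hInt : HasIntersection H (Fintype.card Y / (1 + b))) {t : ℕ}
    (ht : ∀ i < t, Fintype.card Y * i < Fintype.card X) :
    ∃ A : Finset X, #A = t ∧ (b / Fintype.card Y) ^ t * Fintype.card (X → Y) ≤
      {f : X → Y | A.restrict f ∈ RestrictAll H A}.ncard := by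
  classical
  let r (f : X → Y) (A : Finset X) : Prop := A.restrict f ∈ RestrictAll H A
  have proportion_le (f : X → Y) : (b / Fintype.card Y) ^ t * #(powersetCard t (univ : Finset X)) ≤
      #((powersetCard t univ).bipartiteAbove r f) := by
    obtain ⟨S, hS, hle⟩ := hInt.exists_pow_mul_choose_le_choose hb ht f
    have subset_above : powersetCard t (agreementSet S f) ⊆
        (powersetCard t univ).bipartiteAbove r f := fun A hA ↦ by
      obtain ⟨hsub, hcard⟩ := mem_powersetCard.mp hA
      exact mem_filter.mpr ⟨mem_powersetCard_univ.mpr hcard,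
        restrict_mem_restrictAll hS (hAlloc S hS) hsub⟩
    rw [card_powersetCard, card_univ]
    exact hle.trans (mod_cast card_powersetCard t (agreementSet S f) ▸ card_le_card subset_above)
  have t_le_card : t ≤ Fintype.card X := by
    by_contra! hlt
    exact (ht _ hlt).not_ge (Nat.le_mul_of_pos_left _ Fintype.card_pos)
  obtain ⟨A, hA, hle⟩ := exists_mul_card_le_card_bipartiteBelow r (s := univ)
    (powersetCard_nonempty.mpr t_le_card) fun f _ ↦ proportion_le f
  refine ⟨A, mem_powersetCard_univ.mp hA, ?_⟩
  simpa [bipartiteBelow, r, Set.ncard_eq_toFinset_card'] using hle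

theorem HasIntersection.exists_pow_le_ncard_restrictAll [Fintype Y] [Nonempty Y]
    {H : Set (Y → Finset X)} (hAlloc : ∀ S ∈ H, IsDupAlloc 1 S) {b : ℝ} (hb : 0 ≤ b)
    (hInt : HasIntersection H (Fintype.card Y / (1 + b))) {t : ℕ}
    (ht : ∀ i < t, Fintype.card Y * i < Fintype.card X) :
    ∃ A : Finset X, #A = t ∧ b ^ t ≤ (RestrictAll H A).ncard := by
  obtain ⟨A, rfl, hle⟩ := hInt.exists_pow_mul_card_le_ncard_setOf_restrict_mem hAlloc hb ht
  have card_pos : (0 : ℝ) < Fintype.card Y := mod_cast Fintype.card_pos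
  refine ⟨A, rfl, le_of_mul_le_mul_left ?_ (pow_pos card_pos (Fintype.card X))⟩
  calc (Fintype.card Y : ℝ) ^ Fintype.card X * b ^ #A
      = Fintype.card Y ^ #A * ((b / Fintype.card Y) ^ #A * Fintype.card (X → Y)) := by
        rw [Fintype.card_fun, div_pow, Nat.cast_pow]
        field
    _ ≤ Fintype.card Y ^ #A * {f : X → Y | A.restrict f ∈ RestrictAll H A}.ncard := by gcongr
    _ = Fintype.card Y ^ Fintype.card X * (RestrictAll H A).ncard :=
        mod_cast pow_card_mul_ncard_setOf_restrict_mem A (RestrictAll H A)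

theorem large_restriction_from_intersection_general [Fintype Y]
    {H : Set (Y → Finset X)} (hAlloc : ∀ S ∈ H, IsDupAlloc 1 S) {b : ℝ} (hb : 1 ≤ b)
    (hInt : HasIntersection H (Fintype.card Y / (1 + b))) :
    ∃ A : Finset X, (Fintype.card X : ℝ) / Fintype.card Y ≤ #A ∧
      b ^ ((Fintype.card X : ℝ) / Fintype.card Y) ≤ (RestrictAll H A).ncard := by
  suffices h : ∃ A : Finset X, #A = ⌈(Fintype.card X : ℝ) / Fintype.card Y⌉₊ ∧
      b ^ #A ≤ (RestrictAll H A).ncard by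
    obtain ⟨A, hA, hle⟩ := h
    have le_card : (Fintype.card X : ℝ) / Fintype.card Y ≤ #A := hA ▸ Nat.le_ceil _
    exact ⟨A, le_card, (Real.rpow_le_rpow_of_exponent_le hb le_card).trans
      ((Real.rpow_natCast b #A).trans_le hle)⟩
  cases isEmpty_or_nonempty Y with
  | inl =>
    -- Division by `|Y| = 0` makes both the required size and the exponent `0`.
    have one_le_ncard : 1 ≤ (RestrictAll H ∅).ncard :=
      (Set.ncard_pos).mpr (restrictAll_empty_nonempty hInt.nonempty)
    exact ⟨∅, by simp, by simpa using one_le_ncard⟩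
  | inr =>
    have card_pos : 0 < (Fintype.card Y : ℝ) := mod_cast Fintype.card_pos
    obtain ⟨A, hA, hle⟩ := hInt.exists_pow_le_ncard_restrictAll hAlloc (by positivity)
      (t := ⌈(Fintype.card X : ℝ) / Fintype.card Y⌉₊)
      fun i hi ↦ mod_cast (lt_div_iff₀' card_pos).mp (Nat.lt_ceil.mp hi)
    exact ⟨A, hA, hA ▸ hle⟩

end Allocations

/-- Large restriction from approximate intersection (Lemma 5 of Buchfuhrer–Umans). -/
theorem large_restriction_from_intersection (m n k : ℕ) (hk : 1 ≤ k)
    (H : Set (Fin n → Finset (Fin m)))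
    (hAlloc : ∀ S ∈ H, IsDupAlloc 1 S)
    (hInt : HasIntersection H ((n : ℝ) / (1 + 2 * (k : ℝ)))) :
    ∃ S : Finset (Fin m), (m : ℝ) / (n : ℝ) ≤ (S.card : ℝ) ∧
      ((1 + k : ℝ)) ^ ((m : ℝ) / (n : ℝ)) ≤ ((RestrictAll H S).ncard : ℝ) := by
  have hk' : (1 : ℝ) ≤ k := mod_cast hk
  obtain ⟨S, hS, hle⟩ := large_restriction_from_intersection_general hAlloc (b := 2 * k)
    (by linarith) (by simpa using hInt)
  rw [Fintype.card_fin, Fintype.card_fin] at hS hle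
  exact ⟨S, hS, (Real.rpow_le_rpow (by positivity) (by linarith) (by positivity)).trans hle⟩
end

section
/- The class H^𝒴 achieves an l/(l−1) approximation for XOS valuations: Let X and Y be finite sets, l ≥ 2 an integer, and for every x ∈ X fix a partition of Y into l nonempty sets Y = Y_{x,1} ∪̇ ⋯ ∪̇ Y_{x,l}; write 𝒴 = {Y_{x,j}}. Then for every collection {v_y}_{y∈Y} of XOS valuations on X and every partition {S_y}_{y∈Y} of X, there exists a function f ∈ H^𝒴 such that Σ_{y∈Y} v_y(f⁻¹(y)) ≥ ((l−1)/l) · Σ_{y∈Y} v_y(S_y). -/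
open Finset

/-- An XOS valuation: the maximum of finitely many nonnegative additive valuations. -/
def IsXOS {X : Type*} (v : Finset X → ℝ) : Prop :=
  ∃ (r : ℕ) (w : Fin (r + 1) → X → ℝ), (∀ j x, 0 ≤ w j x) ∧
    ∀ S : Finset X, v S = Finset.univ.sup' Finset.univ_nonempty (fun j => ∑ x ∈ S, w j x)

/-- `S` is a partition of `X` indexed by `Y`. -/
def IsPartitionFam {X Y : Type*} (S : Y → Finset X) : Prop :=
  (∀ y y' : Y, y ≠ y' → Disjoint (S y) (S y')) ∧ ∀ x : X, ∃ y : Y, x ∈ S y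

/-!
Fix for each `y` an additive minorant `w y` of `v y` that is exact at `S y`. For fixed `i`, give `x`
to the `y` with `x ∈ S y` whenever `y ∉ P x i`, and to some other permitted element otherwise. The
loss is at most the weight of the pairs `(y, x)` with `x ∈ S y` and `y ∈ P x i`; these sets of pairs
are disjoint for different `i`, so some `i` loses at most a fraction `1 / l` of the total.
-/

open scoped Function

lemma IsXOS.exists_supporting_weight {X : Type*} {v : Finset X → ℝ} (hv : IsXOS v)
    (S : Finset X) :
    ∃ w : X → ℝ, (∀ x, 0 ≤ w x) ∧ v S = ∑ x ∈ S, w x ∧ ∀ T, ∑ x ∈ T, w x ≤ v T := by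
  obtain ⟨r, w, hw, hvw⟩ := hv
  obtain ⟨j, -, hj⟩ := exists_mem_eq_sup' (univ_nonempty (α := Fin (r + 1)))
    (fun j => ∑ x ∈ S, w j x)
  refine ⟨w j, hw j, (hvw S).trans hj, fun T => ?_⟩
  rw [hvw T]
  exact le_sup' (fun j => ∑ x ∈ T, w j x) (mem_univ j)

lemma sum_sum_filter_le_of_pairwise_disjoint {ι α M : Type*} [Fintype ι]
    [AddCommMonoid M] [PartialOrder M] [IsOrderedAddMonoid M]
    {p : ι → α → Prop} [∀ i, DecidablePred (p i)] (hp : Pairwise (Disjoint on p))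
    {s : Finset α} {w : α → M} (hw : ∀ a ∈ s, 0 ≤ w a) :
    ∑ i, ∑ a ∈ s with p i a, w a ≤ ∑ a ∈ s, w a := by
  classical
  rw [← sum_biUnion fun i _ j _ hij => disjoint_filter_filter' s s (hp hij)]
  exact sum_le_sum_of_subset_of_nonneg (biUnion_subset.2 fun i _ => filter_subset (p i) s)
    fun a ha _ => hw a ha

lemma exists_mul_sum_le_sum_filter_not_of_pairwise_disjoint {ι α K : Type*} [Fintype ι]
    [Nonempty ι] [Field K] [LinearOrder K] [IsStrictOrderedRing K]
    {p : ι → α → Prop} [∀ i, DecidablePred (p i)] (hp : Pairwise (Disjoint on p))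
    {s : Finset α} {w : α → K} (hw : ∀ a ∈ s, 0 ≤ w a) :
    ∃ i, ((Fintype.card ι : K) - 1) / Fintype.card ι * ∑ a ∈ s, w a ≤
      ∑ a ∈ s with ¬ p i a, w a := by
  have hι : (Fintype.card ι : K) ≠ 0 := Nat.cast_ne_zero.2 Fintype.card_ne_zero
  have hloss : ∑ i, ∑ a ∈ s with p i a, w a ≤ ∑ _i : ι, (∑ a ∈ s, w a) / Fintype.card ι := by
    rw [sum_const, card_univ, nsmul_eq_mul, mul_div_cancel₀ _ hι]
    exact sum_sum_filter_le_of_pairwise_disjoint hp hw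
  obtain ⟨i, -, hi⟩ := exists_le_of_sum_le univ_nonempty hloss
  refine ⟨i, ?_⟩
  calc ((Fintype.card ι : K) - 1) / Fintype.card ι * ∑ a ∈ s, w a
      = ∑ a ∈ s, w a - (∑ a ∈ s, w a) / Fintype.card ι := by field_simp
    _ ≤ ∑ a ∈ s, w a - ∑ a ∈ s with p i a, w a := sub_le_sub_left hi _
    _ = ∑ a ∈ s with ¬ p i a, w a :=
      sub_eq_of_eq_add' (sum_filter_add_sum_filter_not s (p i) w).symm

lemma exists_forall_mem_and_eq_of_pairwise_disjoint {X Y : Type*} {T : Y → Set X}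
    (hT : Pairwise (Disjoint on T)) {B : X → Set Y} (hB : ∀ x, (B x).Nonempty)
    (hTB : ∀ y, ∀ x ∈ T y, y ∈ B x) :
    ∃ f : X → Y, (∀ x, f x ∈ B x) ∧ ∀ y, ∀ x ∈ T y, f x = y := by
  have hpt (x : X) : ∃ z ∈ B x, ∀ y, x ∈ T y → z = y := by
    by_cases hx : ∃ z, x ∈ T z
    · obtain ⟨z, hz⟩ := hx
      exact ⟨z, hTB z x hz, fun y hy => hT.eq (Set.not_disjoint_iff.2 ⟨x, hz, hy⟩)⟩
    · obtain ⟨z, hz⟩ := hB x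
      exact ⟨z, hz, fun y hy => (hx ⟨y, hy⟩).elim⟩
  choose f hfB hfT using hpt
  exact ⟨f, hfB, fun y x hx => hfT x y hx⟩

lemma exists_notMem_of_pairwise_disjoint {ι Y : Type*} [Nontrivial ι] {A : ι → Finset Y}
    (hA : Pairwise (Disjoint on A)) (hne : ∀ i, (A i).Nonempty) (i : ι) : ∃ y, y ∉ A i := by
  obtain ⟨j, hj⟩ := exists_ne i
  obtain ⟨y, hy⟩ := hne j
  exact ⟨y, disjoint_left.1 (hA hj) hy⟩

theorem HY_xos_approx_general {ι X Y : Type*} [Fintype ι] [Nonempty ι] [Fintype X] [Fintype Y]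
    [DecidableEq Y] {P : X → ι → Finset Y} (hP : ∀ x, Pairwise (Disjoint on P x))
    (hP_ne : ∀ x i, ∃ y, y ∉ P x i) {v : Y → Finset X → ℝ} (hv : ∀ y, IsXOS (v y))
    {S : Y → Finset X} (hS : Pairwise (Disjoint on S)) :
    ∃ f : X → Y, (∃ i, ∀ x, f x ∉ P x i) ∧
      ((Fintype.card ι : ℝ) - 1) / Fintype.card ι * ∑ y, v y (S y) ≤
        ∑ y, v y {x | f x = y} := by
  choose w hw hwS hwv using fun y => (hv y).exists_supporting_weight (S y)
  have hforbidden : Pairwise (Disjoint on fun i (z : Σ _ : Y, X) => z.1 ∈ P z.2 i) := by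
    intro i j hij
    exact Pi.disjoint_iff.2 fun z => Prop.disjoint_iff.2 <| by
      simpa only [not_and] using fun hi => disjoint_left.1 (hP z.2 hij) hi
  obtain ⟨i, hi⟩ := exists_mul_sum_le_sum_filter_not_of_pairwise_disjoint hforbidden
    (s := univ.sigma S) (w := fun z => w z.1 z.2) fun z _ => hw z.1 z.2
  obtain ⟨f, hfP, hfS⟩ := exists_forall_mem_and_eq_of_pairwise_disjoint
    (T := fun y => {x | x ∈ S y ∧ y ∉ P x i}) (B := fun x => {y | y ∉ P x i})
    (fun y y' hy => Set.disjoint_left.2 fun x hx hx' => disjoint_left.1 (hS hy) hx.1 hx'.1)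
    (fun x => hP_ne x i) (fun y x hx => hx.2)
  refine ⟨f, ⟨i, hfP⟩, ?_⟩
  calc ((Fintype.card ι : ℝ) - 1) / Fintype.card ι * ∑ y, v y (S y)
      = ((Fintype.card ι : ℝ) - 1) / Fintype.card ι *
          ∑ z ∈ univ.sigma S, w z.1 z.2 := by
        simp only [hwS, sum_sigma]
    _ ≤ ∑ z ∈ univ.sigma S with z.1 ∉ P z.2 i, w z.1 z.2 := hi
    _ = ∑ y, ∑ x ∈ S y with y ∉ P x i, w y x := by simp only [sum_filter, sum_sigma]
    _ ≤ ∑ y, ∑ x with f x = y, w y x := by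
        gcongr with y
        · exact fun x _ _ => hw y x
        · intro x hx
          simpa using hfS y x (by simpa using hx)
    _ ≤ ∑ y, v y {x | f x = y} := sum_le_sum fun y _ => hwv y _

/-- The class `H^𝒴` achieves an `l/(l-1)` approximation for XOS valuations. -/
theorem HY_xos_approx {X Y : Type*} [Fintype X] [Fintype Y] [DecidableEq Y]
    (l : ℕ) (hl : 2 ≤ l) (P : X → Fin l → Finset Y)
    (hP : ∀ x : X, (∀ i : Fin l, (P x i).Nonempty) ∧
      (∀ i j : Fin l, i ≠ j → Disjoint (P x i) (P x j)) ∧ (∀ y : Y, ∃ i : Fin l, y ∈ P x i))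
    (v : Y → Finset X → ℝ) (hv : ∀ y, IsXOS (v y))
    (S : Y → Finset X) (hS : IsPartitionFam S) :
    ∃ f : X → Y, (∃ i : Fin l, ∀ x : X, f x ∉ P x i) ∧
      (((l : ℝ) - 1) / (l : ℝ)) * (∑ y : Y, v y (S y)) ≤
        ∑ y : Y, v y (Finset.univ.filter (fun x => f x = y)) := by
  have : Nontrivial (Fin l) := Fin.nontrivial_iff_two_le.2 hl
  have hdisj (x : X) : Pairwise (Disjoint on P x) := (hP x).2.1
  simpa only [Fintype.card_fin] using HY_xos_approx_general hdisj
    (fun x => exists_notMem_of_pairwise_disjoint (hdisj x) (hP x).1) hv hS.1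
end

section
/- The class H^𝒴 with l = 2 achieves a 2-approximation for subadditive valuations: Let X and Y be finite sets, and for every x ∈ X fix a partition of Y into two nonempty sets Y = Y_{x,1} ∪̇ Y_{x,2}; write 𝒴 = {Y_{x,j}}. Then for every collection {v_y}_{y∈Y} of normalized, nondecreasing, subadditive valuations on X and every partition {S_y}_{y∈Y} of X, there exists a function f ∈ H^𝒴 such that Σ_{y∈Y} v_y(f⁻¹(y)) ≥ (1/2) · Σ_{y∈Y} v_y(S_y). -/
open Finset

/-- A valuation on `X`: normalized, nonnegative and nondecreasing. -/
def IsValuation {X : Type*} (v : Finset X → ℝ) : Prop :=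
  v ∅ = 0 ∧ (∀ S, 0 ≤ v S) ∧ ∀ S T : Finset X, S ⊆ T → v S ≤ v T

/-- A subadditive valuation: `v (S ∪ T) ≤ v S + v T` for disjoint `S`, `T`. -/
def IsSubadditive {X : Type*} [DecidableEq X] (v : Finset X → ℝ) : Prop :=
  ∀ S T : Finset X, Disjoint S T → v (S ∪ T) ≤ v S + v T

/-!
Fix two indices `i ≠ j`. For each of them, a map `X → Y` avoiding the forbidden parts `P x i`
(resp. `P x j`) can send every `x ∈ S y` to `y` unless `y` itself is forbidden at `x`. The parts
`P x i` and `P x j` are disjoint, so at every point at least one of the two maps follows the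
partition `S`: the fibers of the two maps over `y` together cover `S y`. By subadditivity the two
maps together collect at least the value of `S`, hence the better one collects at least half of it.
-/

theorem IsSubadditive.le_add_of_subset_union {X : Type*} [DecidableEq X] {v : Finset X → ℝ}
    (hv : IsSubadditive v) (hmono : Monotone v) {S A B : Finset X} (hS : S ⊆ A ∪ B) :
    v S ≤ v A + v B :=
  calc
    v S ≤ v (A ∪ B \ A) := hmono (hS.trans_eq union_sdiff_self_eq_union.symm)
    _ ≤ v A + v (B \ A) := hv A (B \ A) disjoint_sdiff
    _ ≤ v A + v B := by gcongr; exact hmono sdiff_subset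

theorem sum_le_sum_fiber_add_sum_fiber {X Y : Type*} [Fintype X] [Fintype Y] [DecidableEq X]
    [DecidableEq Y] {v : Y → Finset X → ℝ} (hmono : ∀ y, Monotone (v y))
    (hsub : ∀ y, IsSubadditive (v y)) {S : Y → Finset X} {f g : X → Y}
    (hfg : ∀ y, ∀ x ∈ S y, f x = y ∨ g x = y) :
    ∑ y, v y (S y) ≤ ∑ y, v y {x | f x = y} + ∑ y, v y {x | g x = y} := by
  rw [← sum_add_distrib]
  refine sum_le_sum fun y _ => (hsub y).le_add_of_subset_union (hmono y) fun x hx => ?_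
  simpa only [mem_union, mem_filter_univ] using hfg y x hx

theorem exists_avoiding_eq_of_mem {X Y : Type*} {S : Y → Finset X}
    (hS : Pairwise (Function.onFun Disjoint S)) {A : X → Finset Y} (hA : ∀ x, ∃ y, y ∉ A x) :
    ∃ f : X → Y, (∀ x, f x ∉ A x) ∧ ∀ y, ∀ x ∈ S y, y ∉ A x → f x = y := by
  have hpoint (x : X) : ∃ z, z ∉ A x ∧ ∀ y, x ∈ S y → y ∉ A x → z = y := by
    by_cases h : ∃ z, x ∈ S z ∧ z ∉ A x
    · obtain ⟨z, hxz, hz⟩ := h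
      exact ⟨z, hz, fun y hxy _ => hS.eq (not_disjoint_iff.mpr ⟨x, hxz, hxy⟩)⟩
    · obtain ⟨z, hz⟩ := hA x
      exact ⟨z, hz, fun y hxy hy => absurd ⟨y, hxy, hy⟩ h⟩
  choose f hfA hfS using hpoint
  exact ⟨f, hfA, fun y x => hfS x y⟩

theorem HY_subadditive_approx_general {X Y ι : Type*} [Fintype X] [Fintype Y] [DecidableEq X]
    [DecidableEq Y] [Nontrivial ι] {P : X → ι → Finset Y} (hne : ∀ x i, (P x i).Nonempty)
    (hdisj : ∀ x, Pairwise (Function.onFun Disjoint (P x))) {v : Y → Finset X → ℝ}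
    (hmono : ∀ y, Monotone (v y)) (hsub : ∀ y, IsSubadditive (v y)) {S : Y → Finset X}
    (hS : Pairwise (Function.onFun Disjoint S)) :
    ∃ f : X → Y, (∃ i, ∀ x, f x ∉ P x i) ∧
      (1 / 2 : ℝ) * ∑ y, v y (S y) ≤ ∑ y, v y {x | f x = y} := by
  have hproper (i : ι) (x : X) : ∃ y, y ∉ P x i := by
    obtain ⟨j, hji⟩ := exists_ne i
    obtain ⟨y, hy⟩ := hne x j
    exact ⟨y, disjoint_left.mp (hdisj x hji) hy⟩
  obtain ⟨i, j, hij⟩ := exists_pair_ne ι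
  obtain ⟨f, hfP, hfS⟩ := exists_avoiding_eq_of_mem hS (hproper i)
  obtain ⟨g, hgP, hgS⟩ := exists_avoiding_eq_of_mem hS (hproper j)
  have hfg : ∀ y, ∀ x ∈ S y, f x = y ∨ g x = y := by
    intro y x hx
    have hallowed : y ∉ P x i ∨ y ∉ P x j :=
      not_and_or.mp fun hy => disjoint_left.mp (hdisj x hij) hy.1 hy.2
    exact hallowed.imp (hfS y x hx) (hgS y x hx)
  have hsum := sum_le_sum_fiber_add_sum_fiber hmono hsub hfg
  rcases le_total (∑ y, v y {x | f x = y}) (∑ y, v y {x | g x = y}) with hle | hle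
  · exact ⟨g, ⟨j, hgP⟩, by linarith⟩
  · exact ⟨f, ⟨i, hfP⟩, by linarith⟩

/-- The class `H^𝒴` with `l = 2` achieves a 2-approximation for subadditive valuations. -/
theorem HY_subadditive_approx {X Y : Type*} [Fintype X] [Fintype Y] [DecidableEq X]
    [DecidableEq Y] (P : X → Fin 2 → Finset Y)
    (hP : ∀ x : X, (∀ i : Fin 2, (P x i).Nonempty) ∧
      (∀ i j : Fin 2, i ≠ j → Disjoint (P x i) (P x j)) ∧ (∀ y : Y, ∃ i : Fin 2, y ∈ P x i))
    (v : Y → Finset X → ℝ) (hv : ∀ y, IsValuation (v y) ∧ IsSubadditive (v y))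
    (S : Y → Finset X) (hS : IsPartitionFam S) :
    ∃ f : X → Y, (∃ i : Fin 2, ∀ x : X, f x ∉ P x i) ∧
      (1 / 2 : ℝ) * (∑ y : Y, v y (S y)) ≤
        ∑ y : Y, v y (Finset.univ.filter (fun x => f x = y)) := by
  exact HY_subadditive_approx_general (fun x => (hP x).1) (fun x i j => (hP x).2.1 i j)
    (fun y S T => (hv y).1.2.2 S T) (fun y => (hv y).2) (fun y y' => hS.1 y y')
end

section
/- Bad points obstruct shattering in H^𝒴: Let X and Y be finite sets, l ≥ 2 an integer, and for every x ∈ X fix a partition of Y into l nonempty sets Y = Y_{x,1} ∪̇ ⋯ ∪̇ Y_{x,l}; write 𝒴 = {Y_{x,j}}. Let S ⊆ X and A ⊆ Y, and call a point x ∈ S bad if A ∩ Y_{x,i} ≠ ∅ for every 1 ≤ i ≤ l. If S contains at least l distinct bad points, then the pair (S, A) is not shattered by H^𝒴; i.e., there exists a function g : S → A that is not the restriction to S of any f ∈ H^𝒴. -/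
open Finset

/-! A diagonal argument: choose distinct bad points `x₁, …, x_l`, one for each part, and let `g`
take at `xᵢ` a value in `A ∩ Y_{xᵢ,i}`. A function agreeing with `g` on `S` then meets the `i`-th
part at `xᵢ`, for every `i`, so there is no part that it avoids everywhere. -/

universe u v w

variable {X : Type u} {Y : Type v} {ι : Type w}

/-- The class `H^𝒴`, for an arbitrary family of sets `P x i` in place of the parts `Y_{x,i}`. -/
def avoidingClass (P : X → ι → Set Y) : Set (X → Y) :=
  {f | ∃ i, ∀ x, f x ∉ P x i}

/-- Shattering of the pair `(S, A)` by the class `H`. The functions `S → A` to be realized are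
encoded as total functions mapping `S` into `A`, which loses none of them when `Y` is nonempty. -/
def ShattersPair (H : Set (X → Y)) (S : Set X) (A : Set Y) : Prop :=
  ∀ g : X → Y, Set.MapsTo g S A → ∃ f ∈ H, Set.EqOn f g S

/-- The bad points of `S`: those at which `A` meets every member of the family. -/
def badPoints (P : X → ι → Set Y) (S : Set X) (A : Set Y) : Set X :=
  {x ∈ S | ∀ i, (A ∩ P x i).Nonempty}

theorem not_shattersPair_iff {H : Set (X → Y)} {S : Set X} {A : Set Y} :
    ¬ShattersPair H S A ↔
      ∃ g : X → Y, Set.MapsTo g S A ∧ ∀ f ∈ H, ∃ x ∈ S, f x ≠ g x := by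
  simp [ShattersPair, Set.EqOn]

theorem not_shattersPair_avoidingClass_of_injective [Nonempty ι] {P : X → ι → Set Y}
    {S : Set X} {A : Set Y} {e : ι → X} (he : e.Injective) (heS : ∀ i, e i ∈ S)
    (heA : ∀ i, (A ∩ P (e i) i).Nonempty) : ¬ShattersPair (avoidingClass P) S A := by
  choose y hyA hyP using heA
  let a : ι → A := fun i ↦ ⟨y i, hyA i⟩
  let g : X → A := Function.extend e a fun _ ↦ a (Classical.arbitrary ι)
  have hg (i : ι) : (g (e i) : Y) = y i := congrArg Subtype.val (he.extend_apply a _ i)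
  intro hshat
  obtain ⟨f, ⟨i, hf⟩, hfg⟩ := hshat (fun x ↦ g x) fun x _ ↦ (g x).2
  have hfy : f (e i) = y i := (hfg (heS i)).trans (hg i)
  exact hf (e i) (hfy ▸ hyP i)

open scoped Cardinal in
theorem bad_points_obstruct_shattering_general [Nonempty ι] {P : X → ι → Set Y}
    {S : Set X} {A : Set Y}
    (hbad : Cardinal.lift.{u} #ι ≤ Cardinal.lift.{w} #(badPoints P S A)) :
    ¬ShattersPair (avoidingClass P) S A := by
  obtain ⟨e⟩ := Cardinal.lift_mk_le'.mp hbad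
  exact not_shattersPair_avoidingClass_of_injective (Subtype.val_injective.comp e.injective)
    (fun i ↦ (e i).2.1) fun i ↦ (e i).2.2 i

theorem badPoints_coe [Fintype ι] [DecidableEq Y] (P : X → ι → Finset Y)
    (S : Finset X) (A : Finset Y) :
    badPoints (fun x i ↦ (P x i : Set Y)) S A =
      (S.filter (fun x ↦ ∀ i, (A ∩ P x i).Nonempty) : Finset X) := by
  ext x
  simp only [badPoints, ← coe_inter, coe_nonempty, mem_coe, coe_filter]

/-- Bad points obstruct shattering in `H^𝒴`. -/
theorem bad_points_obstruct_shattering {X Y : Type*} [Fintype X] [Fintype Y]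
    [DecidableEq X] [DecidableEq Y]
    (l : ℕ) (hl : 2 ≤ l) (P : X → Fin l → Finset Y)
    (hP : ∀ x : X, (∀ i : Fin l, (P x i).Nonempty) ∧
      (∀ i j : Fin l, i ≠ j → Disjoint (P x i) (P x j)) ∧ (∀ y : Y, ∃ i : Fin l, y ∈ P x i))
    (S : Finset X) (A : Finset Y)
    (hbad : l ≤ (S.filter (fun x => ∀ i : Fin l, (A ∩ P x i).Nonempty)).card) :
    ∃ g : X → Y, (∀ x ∈ S, g x ∈ A) ∧
      ∀ f : X → Y, (∃ i : Fin l, ∀ x : X, f x ∉ P x i) → ∃ x ∈ S, f x ≠ g x := by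
  have : NeZero l := ⟨by lia⟩
  exact not_shattersPair_iff.mp <| bad_points_obstruct_shattering_general
    (P := fun x i ↦ (P x i : Set Y)) (S := S) (A := A) <| by simpa [badPoints_coe] using hbad
end

section
/- Tightness of the generalized Sauer–Shelah bound when k = n: Fix integers m ≥ d ≥ 0 and n ≥ k ≥ 2, and let H ⊆ [n]^{[m]} be the class of all functions f : [m] → [n] such that |{x ∈ [m] : f(x) ≥ k}| ≤ d. Then Dim_k(H) = d and |H| = Σ_{i=0}^{d} C(m, i) · (k−1)^{m−i} · (n+1−k)^i. -/
open Finset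

/-- The class of all functions `f : [m] → [n]` taking a value `≥ k` (in the 1-indexed sense:
`(f x).val + 1 ≥ k`) on at most `d` points. -/
def tightClass (m n k d : ℕ) : Finset (Fin m → Fin n) :=
  Finset.univ.filter (fun f : Fin m → Fin n =>
    (Finset.univ.filter (fun x : Fin m => k ≤ (f x : ℕ) + 1)).card ≤ d)

/-!
Call a value *high* if it lies in a set `T`. A function with few high values is chosen by first
choosing the set of points where it is high, then its values there in `T` and elsewhere outside `T`;
this gives the cardinality. If `T` misses fewer than `k` values, every `k`-set contains a high value,
so a `k`-shattered set `A` carries a function of the class that is high on all of `A`. Conversely,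
any function on a set of at most `d` points extends to a member of the class, by a constant value
that is not high.
-/

section FewHighValues

variable {X Y : Type*} [Fintype X] [DecidableEq X] [Fintype Y] [DecidableEq Y]

/-- The class of all functions `X → Y` taking a value in `T` on at most `d` points, the analogue of
`tightClass` for an arbitrary set `T` of high values. -/
def hittingAtMost (T : Finset Y) (d : ℕ) : Finset (X → Y) :=
  {f | #{x | f x ∈ T} ≤ d}

lemma mem_hittingAtMost {T : Finset Y} {d : ℕ} {f : X → Y} :
    f ∈ hittingAtMost T d ↔ #{x | f x ∈ T} ≤ d := by
  simp [hittingAtMost]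

lemma filter_preimage_eq_piFinset (T : Finset Y) (S : Finset X) :
    ({f | ({x | f x ∈ T} : Finset X) = S} : Finset (X → Y)) =
      Fintype.piFinset fun x ↦ if x ∈ S then T else Tᶜ := by
  ext f
  simp only [mem_filter_univ, Fintype.mem_piFinset, Finset.ext_iff]
  refine forall_congr' fun x ↦ ?_
  by_cases hx : x ∈ S <;> simp [hx]

lemma card_filter_preimage_eq (T : Finset Y) (S : Finset X) :
    #{f : X → Y | ({x | f x ∈ T} : Finset X) = S} = #Tᶜ ^ #Sᶜ * #T ^ #S := by
  rw [filter_preimage_eq_piFinset, Fintype.card_piFinset, mul_comm]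
  simp [apply_ite card, prod_ite, filter_notMem_eq_sdiff, compl_eq_univ_sdiff]

lemma card_filter_card_preimage_eq (T : Finset Y) (i : ℕ) :
    #{f : X → Y | #{x | f x ∈ T} = i} =
      (Fintype.card X).choose i * #Tᶜ ^ (Fintype.card X - i) * #T ^ i := by
  calc #{f : X → Y | #{x | f x ∈ T} = i}
      = #{f : X → Y | ({x | f x ∈ T} : Finset X) ∈ powersetCard i univ} := by
        simp [mem_powersetCard]
    _ = ∑ S ∈ powersetCard i univ, #{f : X → Y | ({x | f x ∈ T} : Finset X) = S} :=
        (sum_card_fiberwise_eq_card_filter _ _ _).symm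
    _ = ∑ _S ∈ powersetCard i (univ : Finset X), #Tᶜ ^ (Fintype.card X - i) * #T ^ i :=
        sum_congr rfl fun S hS ↦ by
          rw [card_filter_preimage_eq, card_compl S, (mem_powersetCard.1 hS).2]
    _ = (Fintype.card X).choose i * #Tᶜ ^ (Fintype.card X - i) * #T ^ i := by
        simp [mul_assoc]

lemma card_hittingAtMost (T : Finset Y) (d : ℕ) :
    #(hittingAtMost T d : Finset (X → Y)) = ∑ i ∈ range (d + 1),
      (Fintype.card X).choose i * #Tᶜ ^ (Fintype.card X - i) * #T ^ i := by
  calc #(hittingAtMost T d : Finset (X → Y))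
      = #{f : X → Y | #{x | f x ∈ T} ∈ range (d + 1)} := by
        simp [hittingAtMost]
    _ = ∑ i ∈ range (d + 1), #{f : X → Y | #{x | f x ∈ T} = i} :=
        (sum_card_fiberwise_eq_card_filter _ _ _).symm
    _ = _ := sum_congr rfl fun i _ ↦ card_filter_card_preimage_eq T i

lemma kShatters_hittingAtMost_of_card_le {T : Finset Y} {d k : ℕ} {A : Finset X}
    (hT : Tᶜ.Nonempty) (hk : k ≤ Fintype.card Y) (hA : #A ≤ d) :
    kShatters (hittingAtMost T d) k A := by
  obtain ⟨y, hy⟩ := hT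
  obtain ⟨Z, -, hZ⟩ := exists_subset_card_eq (s := (univ : Finset Y)) hk
  refine ⟨fun _ ↦ Z, fun _ _ ↦ hZ, fun f _ ↦
    ⟨A.piecewise f fun _ ↦ y, ?_, fun a ha ↦ piecewise_eq_of_mem _ _ _ ha⟩⟩
  have high_subset : ({x | A.piecewise f (fun _ ↦ y) x ∈ T} : Finset X) ⊆ A := fun x hx ↦ by
    by_contra hxA
    simp_all
  exact mem_hittingAtMost.2 ((card_le_card high_subset).trans hA)

lemma card_le_of_kShatters_hittingAtMost {T : Finset Y} {d k : ℕ} {A : Finset X}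
    (hTk : #Tᶜ < k) (hA : kShatters (hittingAtMost T d) k A) : #A ≤ d := by
  obtain rfl | ⟨a₀, ha₀⟩ := A.eq_empty_or_nonempty
  · simp
  obtain ⟨Ya, hYa, hext⟩ := hA
  have exists_high : ∀ a ∈ A, ∃ y ∈ Ya a, y ∈ T := fun a ha ↦ by
    simpa using exists_mem_notMem_of_card_lt_card (hTk.trans_eq (hYa a ha).symm)
  have : Nonempty Y := ⟨(exists_high a₀ ha₀).choose⟩
  choose! f hf_mem hf_high using exists_high
  obtain ⟨h, hh, h_eq⟩ := hext f hf_mem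
  have A_subset : A ⊆ ({x | h x ∈ T} : Finset X) := fun a ha ↦ by
    simpa [h_eq a ha] using hf_high a ha
  exact (card_le_card A_subset).trans (mem_hittingAtMost.1 hh)

end FewHighValues

lemma kDim_eq_min_of_kShatters_iff {X Y : Type*} [Fintype X] {H : Finset (X → Y)} {k d : ℕ}
    (hH : ∀ A, kShatters H k A ↔ #A ≤ d) : kDim H k = min d (Fintype.card X) := by
  refine IsGreatest.csSup_eq ⟨?_, ?_⟩
  · obtain ⟨A, -, hA⟩ := exists_subset_card_eq (s := (univ : Finset X)) (min_le_right d _)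
    exact ⟨A, (hH A).2 (hA.trans_le (min_le_left _ _)), hA⟩
  · rintro _ ⟨A, hA, rfl⟩
    exact le_min ((hH A).1 hA) (card_le_univ A)

theorem sauer_gen_tight_general {X Y : Type*} [Fintype X] [DecidableEq X] [Fintype Y]
    [DecidableEq Y] {T : Finset Y} {k : ℕ} (d : ℕ) (hT : Tᶜ.Nonempty) (hTk : #Tᶜ < k)
    (hk : k ≤ Fintype.card Y) :
    kDim (hittingAtMost T d : Finset (X → Y)) k = min d (Fintype.card X) ∧
      #(hittingAtMost T d : Finset (X → Y)) = ∑ i ∈ range (d + 1),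
        (Fintype.card X).choose i * #Tᶜ ^ (Fintype.card X - i) * #T ^ i :=
  ⟨kDim_eq_min_of_kShatters_iff fun _ ↦
    ⟨card_le_of_kShatters_hittingAtMost hTk, kShatters_hittingAtMost_of_card_le hT hk⟩,
    card_hittingAtMost T d⟩

/-- The high values of `tightClass`: the set `{k, …, n}` of the paper, whose value `j` is encoded
by the element `j - 1` of `Fin n`. -/
def highValues (n k : ℕ) : Finset (Fin n) :=
  {y | k ≤ (y : ℕ) + 1}

lemma tightClass_eq_hittingAtMost (m n k d : ℕ) :
    tightClass m n k d = hittingAtMost (highValues n k) d := by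
  simp [tightClass, hittingAtMost, highValues]

lemma card_compl_highValues (n k : ℕ) : #(highValues n k)ᶜ = min n (k - 1) := by
  rw [← Fin.card_filter_val_lt]
  congr 1
  ext y
  simp only [highValues, mem_compl, mem_filter_univ]
  omega

lemma card_highValues {n k : ℕ} (hk : 1 ≤ k) : #(highValues n k) = n + 1 - k := by
  have h := card_add_card_compl (highValues n k)
  rw [card_compl_highValues, Fintype.card_fin] at h
  omega

/-- Tightness of the generalized Sauer–Shelah bound when `k = n`:
the class of functions taking a value `≥ k` at most `d` times has `k`-dimension `d` and
cardinality `∑_{i=0}^{d} C(m,i) (k-1)^{m-i} (n+1-k)^i`. -/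
theorem sauer_gen_tight (m d n k : ℕ) (hdm : d ≤ m) (hk2 : 2 ≤ k) (hkn : k ≤ n) :
    kDim (tightClass m n k d) k = d ∧
      (tightClass m n k d).card =
        ∑ i ∈ Finset.range (d + 1), m.choose i * (k - 1) ^ (m - i) * (n + 1 - k) ^ i := by
  have card_low : #(highValues n k)ᶜ = k - 1 := by rw [card_compl_highValues]; omega
  have low_nonempty : (highValues n k)ᶜ.Nonempty := card_pos.1 (by omega)
  simpa [tightClass_eq_hittingAtMost, card_low, card_highValues (show 1 ≤ k by omega), hdm] using
    sauer_gen_tight_general (X := Fin m) d low_nonempty (by omega) (by simpa using hkn)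
end
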